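/- Let a_1, …, a_k be integers with a_i ≥ 2 for all i, let s = [a_1, …, a_k]^- (so s > 1), and set r' = s/(s−1). Then for every rational number x, [x, r']^- = [x−1, −a_1, −a_2, …, −a_k]^-, i.e. x − 1/r' = [x−1, −a_1, −a_2, …, −a_k]^-. -/

import Mathlib

/-- Negative continued fraction `[c₁, …, cₙ]⁻ = c₁ - 1/[c₂, …, cₙ]⁻` of a
finite sequence of rationals (junk value `0` on the empty list). -/
def negCF : List ℚ → ℚ
  | [] => 0
  | [c] => c
  | c :: d :: t => c - 1 / negCF (d :: t)

/-!
Negating every entry of a negative continued fraction negates its value. With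
`s = [a₁, …, a_k]⁻`, both sides of the identity are therefore `x - 1 + 1/s`, because
`1/r' = (s - 1)/s = 1 - 1/s`. The bound `s > 1` is inherited from tail to head, since
`c ≥ 2` and `t > 1` give `c - 1/t > 2 - 1`.
-/

theorem negCF_cons {l : List ℚ} (hl : l ≠ []) (c : ℚ) :
    negCF (c :: l) = c - 1 / negCF l := by
  cases l with
  | nil => exact absurd rfl hl
  | cons d t => rfl

theorem negCF_map_neg (l : List ℚ) : negCF (l.map fun a => -a) = -negCF l := by
  induction l with
  | nil => exact neg_zero.symm
  | cons c t ih =>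
    rcases eq_or_ne t [] with rfl | ht
    · rfl
    · calc negCF ((c :: t).map fun a => -a)
          = -c - 1 / negCF (t.map fun a => -a) := negCF_cons (by simpa using ht) (-c)
        _ = -(c - 1 / negCF t) := by rw [ih, one_div_neg_eq_neg_one_div]; ring
        _ = -negCF (c :: t) := by rw [negCF_cons ht]

theorem one_lt_negCF {l : List ℚ} (hl : l ≠ []) (h2 : ∀ a ∈ l, 2 ≤ a) : 1 < negCF l := by
  induction l with
  | nil => exact absurd rfl hl
  | cons c t ih =>
    obtain ⟨hc, ht2⟩ := List.forall_mem_cons.mp h2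
    rcases eq_or_ne t [] with rfl | ht
    · exact one_lt_two.trans_le hc
    · have h_inv : 1 / negCF t < 1 := by
        simpa only [one_div] using inv_lt_one_of_one_lt₀ (ih ht ht2)
      rw [negCF_cons ht]
      linarith

theorem sub_one_div_negCF_div {l : List ℚ} (h : negCF l ≠ 0) (x : ℚ) :
    x - 1 / (negCF l / (negCF l - 1)) = negCF ((x - 1) :: l.map fun a => -a) := by
  have hl : l ≠ [] := by
    rintro rfl
    exact h rfl
  calc x - 1 / (negCF l / (negCF l - 1))
      = x - 1 - 1 / -negCF l := by
        rw [one_div_div, sub_div, div_self h, one_div_neg_eq_neg_one_div]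
        ring
    _ = negCF ((x - 1) :: l.map fun a => -a) := by
        rw [negCF_cons (by simpa using hl), negCF_map_neg]

theorem stmt17_general (l : List ℚ) (hl : l ≠ []) (h2 : ∀ a ∈ l, 2 ≤ a) :
    1 < negCF l ∧
    ∀ x : ℚ,
      x - 1 / (negCF l / (negCF l - 1)) = negCF ((x - 1) :: l.map fun a => -a) := by
  have hs : 1 < negCF l := one_lt_negCF hl h2
  exact ⟨hs, sub_one_div_negCF_div (zero_lt_one.trans hs).ne'⟩

/-- Let `a₁, …, a_k` be integers `≥ 2`, let `s = [a₁, …, a_k]⁻` (so `s > 1`),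
and set `r' = s/(s-1)`. Then for every rational `x`,
`[x, r']⁻ = x - 1/r' = [x-1, -a₁, -a₂, …, -a_k]⁻`. -/
theorem stmt17 (C : List ℤ) (hC : C ≠ []) (h2 : ∀ a ∈ C, 2 ≤ a) :
    1 < negCF (C.map fun a => (a : ℚ)) ∧
    ∀ x : ℚ,
      x - 1 / (negCF (C.map fun a => (a : ℚ)) /
        (negCF (C.map fun a => (a : ℚ)) - 1)) =
      negCF ((x - 1) :: C.map fun a => (-a : ℚ)) := by
  -- `C` is coerced to `C >>= fun a => pure (a : ℚ)` before either map is applied.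
  simp only [List.map_id', bind_pure_comp, List.map_eq_map]
  exact stmt17_general _ (by simpa using hC) (List.forall_mem_map.mpr (mod_cast h2))
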